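/- arXiv:2002.07142 — 3 statements merged into one kernel-verified Lean document; each statement's English description precedes it below -/
import Mathlib

section
/- For every x ∈ ℝ with x ≠ 0, the principal value integral pv∫_ℝ (log|y| − log|x|)/(y−x)² dy exists and equals 0. (In other words, the half-Laplacian of the function (1/π)log|x|, computed by the principal value formula, vanishes pointwise away from the origin.) -/
open MeasureTheory Filter

/-!
Put `h t = t log |t|`. For `x ≠ 0` the function `y ↦ (log |y - x| - slope h x y) / x` is
continuous away from `x`, vanishes at infinity, and has derivative `(log |y| - log |x|) / (y - x)²`
outside `{0, x}`. Evaluating it at `x ± ε`, the terms `log ε` cancel and the truncated integral is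
exactly `(slope h x (x + ε) - slope h x (x - ε)) / x`. Both slopes tend to the
derivative of `h` at `x`.
-/

open Set Topology Asymptotics

theorem setOf_lt_abs_sub {α : Type*} [AddCommGroup α] [LinearOrder α] [IsOrderedAddMonoid α]
    (x ε : α) : {y | ε < |y - x|} = Iio (x - ε) ∪ Ioi (x + ε) := by
  ext y
  simp only [mem_ofPred_eq, mem_union, mem_Iio, mem_Ioi, lt_abs, neg_sub, lt_sub_iff_add_lt,
    add_comm ε y, add_comm x ε, or_comm]

theorem tendsto_slope_add_sub_slope_sub {𝕜 E : Type*} [NontriviallyNormedField 𝕜]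
    [NormedAddCommGroup E] [NormedSpace 𝕜 E] {f : 𝕜 → E} {x : 𝕜} (hf : DifferentiableAt 𝕜 f x) :
    Tendsto (fun ε ↦ slope f x (x + ε) - slope f x (x - ε)) (𝓝[≠] 0) (𝓝 0) := by
  have hslope := hf.hasDerivAt.tendsto_slope
  have hadd : Tendsto (fun ε ↦ x + ε) (𝓝[≠] 0) (𝓝[≠] x) := by
    simpa using ((hasDerivAt_id (0 : 𝕜)).const_add x).tendsto_nhdsNE one_ne_zero
  have hsub : Tendsto (fun ε ↦ x - ε) (𝓝[≠] 0) (𝓝[≠] x) := by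
    simpa using ((hasDerivAt_id (0 : 𝕜)).const_sub x).tendsto_nhdsNE (neg_ne_zero.2 one_ne_zero)
  simpa only [sub_self, Function.comp_def] using (hslope.comp hadd).sub (hslope.comp hsub)

theorem integral_Ioi_of_hasDerivAt_off_countable_of_tendsto {E : Type*} [NormedAddCommGroup E]
    [NormedSpace ℝ E] [CompleteSpace E] {f f' : ℝ → E} {a : ℝ} {m : E} {s : Set ℝ}
    (hs : s.Countable) (hcont : ContinuousOn f (Ici a))
    (hderiv : ∀ y ∈ Ioi a \ s, HasDerivAt f (f' y) y) (f'int : IntegrableOn f' (Ioi a))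
    (hf : Tendsto f atTop (𝓝 m)) : ∫ y in Ioi a, f' y = m - f a := by
  refine tendsto_nhds_unique (intervalIntegral_tendsto_integral_Ioi a f'int tendsto_id) ?_
  refine (hf.sub_const (f a)).congr' ?_
  filter_upwards [Ici_mem_atTop a] with b hab
  refine (integral_eq_of_hasDerivAt_off_countable_of_le f f' hab hs
    (hcont.mono Icc_subset_Ici_self) (fun y hy ↦ hderiv y ⟨hy.1.1, hy.2⟩) ?_).symm
  exact (intervalIntegrable_iff_integrableOn_Ioc_of_le hab).2 (f'int.mono_set Ioc_subset_Ioi_self)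

theorem locallyIntegrable_log : LocallyIntegrable Real.log := fun y ↦
  ⟨Icc (y - 1) (y + 1), Icc_mem_nhds (by linarith) (by linarith),
    (intervalIntegrable_iff_integrableOn_Icc_of_le (by linarith)).1
      intervalIntegral.intervalIntegrable_log'⟩

theorem isBigO_log_sub_const_div_sub_sq (x c : ℝ) :
    (fun y ↦ (Real.log y - c) / (y - x) ^ 2) =O[atTop] fun y ↦ y ^ (-(3 / 2) : ℝ) := by
  have hlog : (fun y ↦ Real.log y - c) =O[atTop] fun y ↦ y ^ (1 / 2 : ℝ) :=
    ((isLittleO_log_rpow_atTop one_half_pos).sub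
      (isLittleO_const_left.2 <| .inr <| tendsto_norm_atTop_atTop.comp <|
        tendsto_rpow_atTop one_half_pos)).isBigO
  have hsub : (fun y ↦ ((y - x) ^ 2)⁻¹) =O[atTop] fun y : ℝ ↦ (y ^ 2)⁻¹ :=
    ((IsEquivalent.refl.sub_isLittleO (isLittleO_const_id_atTop x)).pow 2).inv.isBigO
  refine (hlog.mul hsub).congr' (.of_forall fun y ↦ (div_eq_mul_inv _ _).symm) ?_
  filter_upwards [Ioi_mem_atTop 0] with y hy
  rw [← Real.rpow_natCast, ← Real.rpow_neg hy.le, ← Real.rpow_add hy]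
  norm_num

theorem integrableOn_Ioi_log_sub_const_div_sub_sq {x a : ℝ} (hxa : x < a) (c : ℝ) :
    IntegrableOn (fun y ↦ (Real.log y - c) / (y - x) ^ 2) (Ioi a) := by
  have hlocal : LocallyIntegrableOn (fun y ↦ (Real.log y - c) / (y - x) ^ 2) (Ici a) := by
    simp only [div_eq_mul_inv]
    refine ((locallyIntegrable_log.sub (locallyIntegrable_const c)).locallyIntegrableOn
      (Ici a)).mul_continuousOn ?_ isClosed_Ici.isLocallyClosed
    refine ContinuousOn.inv₀ (by fun_prop) fun y hy ↦ ?_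
    exact pow_ne_zero 2 (sub_ne_zero.2 (hxa.trans_le hy).ne')
  exact (hlocal.integrableOn_of_isBigO_atTop (isBigO_log_sub_const_div_sub_sq x c)
    (integrableAtFilter_rpow_atTop_iff.2 (by norm_num))).mono_set Ioi_subset_Ici_self

theorem integrableOn_Iio_log_sub_const_div_sub_sq {x a : ℝ} (hax : a < x) (c : ℝ) :
    IntegrableOn (fun y ↦ (Real.log y - c) / (y - x) ^ 2) (Iio a) := by
  have hreflect := (integrableOn_Ioi_log_sub_const_div_sub_sq (neg_lt_neg hax) c).comp_neg_Iio
  refine hreflect.congr_fun (fun y _ ↦ ?_) measurableSet_Iio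
  simp only [Real.log_neg_eq_log, neg_sub_neg, sub_sq_comm x y]

theorem integrableOn_log_sub_const_div_sub_sq {ε : ℝ} (hε : 0 < ε) (x c : ℝ) :
    IntegrableOn (fun y ↦ (Real.log y - c) / (y - x) ^ 2) {y | ε < |y - x|} := by
  rw [setOf_lt_abs_sub]
  exact (integrableOn_Iio_log_sub_const_div_sub_sq (sub_lt_self x hε) c).union
    (integrableOn_Ioi_log_sub_const_div_sub_sq (lt_add_of_pos_right x hε) c)

/-- A primitive in `y` of `(log |y| - log |x|) / (y - x) ^ 2`, normalised to vanish at infinity.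
Writing it with the slope of `t * log t` makes its continuity at `y = 0` visible. -/
noncomputable def logQuotientPrimitive (x y : ℝ) : ℝ :=
  (Real.log (y - x) - slope (fun t ↦ t * Real.log t) x y) / x

theorem hasDerivAt_logQuotientPrimitive {x y : ℝ} (hx : x ≠ 0) (hy : y ≠ 0) (hyx : y ≠ x) :
    HasDerivAt (logQuotientPrimitive x) ((Real.log y - Real.log x) / (y - x) ^ 2) y := by
  have hne : y - x ≠ 0 := sub_ne_zero.2 hyx
  have hsub : HasDerivAt (fun z ↦ z - x) 1 y := (hasDerivAt_id y).sub_const x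
  have hslope := ((Real.hasDerivAt_mul_log hy).sub_const (x * Real.log x)).div hsub hne
  unfold logQuotientPrimitive
  simp only [slope_def_field]
  refine (((hsub.log hne).sub hslope).div_const x).congr_deriv ?_
  field_simp
  ring

theorem continuousAt_logQuotientPrimitive {x y : ℝ} (hyx : y ≠ x) :
    ContinuousAt (logQuotientPrimitive x) y := by
  have hne : y - x ≠ 0 := sub_ne_zero.2 hyx
  have hsub : ContinuousAt (fun z ↦ z - x) y := by fun_prop
  have hmul : ContinuousAt (fun z ↦ z * Real.log z - x * Real.log x) y :=
    Real.continuous_mul_log.continuousAt.sub continuousAt_const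
  unfold logQuotientPrimitive
  simp only [slope_def_field]
  exact ((hsub.log hne).sub (hmul.div hsub hne)).div_const x

theorem tendsto_logQuotientPrimitive_atTop (x : ℝ) :
    Tendsto (logQuotientPrimitive x) atTop (𝓝 0) := by
  have hlog : Tendsto (fun y ↦ Real.log (y - x) - Real.log y) atTop (𝓝 0) := by
    simpa only [sub_eq_add_neg] using Real.tendsto_log_comp_add_sub_log (-x)
  have hquot : Tendsto (fun y ↦ (Real.log y - Real.log x) / (y - x)) atTop (𝓝 0) := by
    have hlogdiv := Real.tendsto_pow_log_div_mul_add_atTop 1 (-x) 1 one_ne_zero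
    have hconst := Real.tendsto_pow_log_div_mul_add_atTop 1 (-x) 0 one_ne_zero
    simpa [sub_mul, ← sub_eq_add_neg, div_eq_mul_inv] using
      hlogdiv.sub (hconst.const_mul (Real.log x))
  have hsum := (hlog.sub (hquot.const_mul x)).div_const x
  simp only [mul_zero, sub_zero, zero_div] at hsum
  refine hsum.congr' ?_
  filter_upwards [eventually_ne_atTop x] with y hyx
  have hne : y - x ≠ 0 := sub_ne_zero.2 hyx
  rw [logQuotientPrimitive, slope_def_field]
  congr 1
  field_simp
  ring

theorem logQuotientPrimitive_neg_neg (x y : ℝ) :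
    logQuotientPrimitive (-x) (-y) = -logQuotientPrimitive x y := by
  have hlog : Real.log (-y - -x) = Real.log (y - x) := by
    rw [neg_sub_neg, ← neg_sub, Real.log_neg_eq_log]
  have hslope : slope (fun t ↦ t * Real.log t) (-x) (-y) = slope (fun t ↦ t * Real.log t) x y := by
    simp only [slope_def_field, Real.log_neg_eq_log]
    rw [← neg_div_neg_eq]
    ring_nf
  rw [logQuotientPrimitive, hlog, hslope, div_neg, logQuotientPrimitive]

theorem integral_Ioi_log_sub_log_div_sub_sq {x a : ℝ} (hx : x ≠ 0) (hxa : x < a) :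
    ∫ y in Ioi a, (Real.log y - Real.log x) / (y - x) ^ 2 = -logQuotientPrimitive x a := by
  rw [← zero_sub]
  exact integral_Ioi_of_hasDerivAt_off_countable_of_tendsto (countable_singleton 0)
    (fun y hy ↦ (continuousAt_logQuotientPrimitive (hxa.trans_le hy).ne').continuousWithinAt)
    (fun y hy ↦ hasDerivAt_logQuotientPrimitive hx hy.2 (hxa.trans hy.1).ne')
    (integrableOn_Ioi_log_sub_const_div_sub_sq hxa _) (tendsto_logQuotientPrimitive_atTop x)

theorem integral_Iio_log_sub_log_div_sub_sq {x a : ℝ} (hx : x ≠ 0) (hax : a < x) :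
    ∫ y in Iio a, (Real.log y - Real.log x) / (y - x) ^ 2 = logQuotientPrimitive x a := by
  have hreflect := integral_Ioi_log_sub_log_div_sub_sq (neg_ne_zero.2 hx) (neg_lt_neg hax)
  rw [← integral_comp_neg_Iic, integral_Iic_eq_integral_Iio, logQuotientPrimitive_neg_neg, neg_neg]
    at hreflect
  rw [← hreflect]
  congr! 3 with y
  · simp
  · ring

theorem integral_log_sub_log_div_sub_sq {x ε : ℝ} (hx : x ≠ 0) (hε : 0 < ε) :
    ∫ y in {y : ℝ | ε < |y - x|}, (Real.log y - Real.log x) / (y - x) ^ 2 =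
      (slope (fun t ↦ t * Real.log t) x (x + ε) -
        slope (fun t ↦ t * Real.log t) x (x - ε)) / x := by
  have hleft : x - ε < x := sub_lt_self x hε
  have hright : x < x + ε := lt_add_of_pos_right x hε
  have hdisj : Disjoint (Iio (x - ε)) (Ioi (x + ε)) := Iio_disjoint_Ioi_of_le (by linarith)
  rw [setOf_lt_abs_sub, setIntegral_union hdisj measurableSet_Ioi
      (integrableOn_Iio_log_sub_const_div_sub_sq hleft _)
      (integrableOn_Ioi_log_sub_const_div_sub_sq hright _),
    integral_Iio_log_sub_log_div_sub_sq hx hleft, integral_Ioi_log_sub_log_div_sub_sq hx hright]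
  simp only [logQuotientPrimitive, sub_sub_cancel_left, add_sub_cancel_left, Real.log_neg_eq_log]
  ring

/-- The half-Laplacian of `(1/π) log |·|`, computed by the principal value formula,
vanishes pointwise away from the origin: for `x ≠ 0`, the truncated integrals
`∫_{|y-x|>ε} (log|y| - log|x|)/(y-x)² dy` exist for every `ε > 0` and tend to `0`
as `ε → 0⁺`. -/
theorem halfLaplacian_log_eq_zero (x : ℝ) (hx : x ≠ 0) :
    (∀ ε : ℝ, 0 < ε →
      IntegrableOn (fun y => (Real.log |y| - Real.log |x|) / (y - x) ^ 2)
        {y : ℝ | ε < |y - x|}) ∧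
    Tendsto
      (fun ε : ℝ => ∫ y in {y : ℝ | ε < |y - x|},
        (Real.log |y| - Real.log |x|) / (y - x) ^ 2)
      (nhdsWithin 0 (Set.Ioi 0)) (nhds 0) := by
  simp only [Real.log_abs]
  refine ⟨fun ε hε ↦ integrableOn_log_sub_const_div_sub_sq hε x _, ?_⟩
  have hslopes : Tendsto (fun ε ↦ (slope (fun t ↦ t * Real.log t) x (x + ε) -
      slope (fun t ↦ t * Real.log t) x (x - ε)) / x) (𝓝[>] 0) (𝓝 0) := by
    simpa only [zero_div] using ((tendsto_slope_add_sub_slope_sub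
      (Real.hasDerivAt_mul_log hx).differentiableAt).mono_left (nhdsGT_le_nhdsNE 0)).div_const x
  refine hslopes.congr' ?_
  filter_upwards [self_mem_nhdsWithin] with ε hε
  exact (integral_log_sub_log_div_sub_sq hx hε).symm
end

section
/- For each θ ∈ (0,1) there is a constant C < ∞ such that for every function K: ℝ → ℝ that is continuous on ℝ, continuously differentiable on ℝ∖{0}, and has ‖K‖_{1−θ;1} < ∞, and all α, y, z ∈ ℝ, one has |□K(α;y,z)| ≤ C ‖K‖_{1−θ;1} (min(|y|,|z|))^{1−θ}. -/
/-- The set whose supremum is the singular kernel norm `‖K‖_{ζ;m}`. -/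
noncomputable def singSet (ζ : ℝ) (m : ℕ) (K : ℝ → ℝ) : Set ℝ :=
  {r | ∃ (k : ℕ) (x : ℝ), k ≤ m ∧ x ≠ 0 ∧
    r = |x| ^ ((k : ℝ) - ζ) * |iteratedDeriv k K x|}

/-- The singular kernel norm `‖K‖_{ζ;m} = sup_{0≤k≤m} sup_{x≠0} |x|^(k-ζ) |K^(k)(x)|`. -/
noncomputable def singNorm (ζ : ℝ) (m : ℕ) (K : ℝ → ℝ) : ℝ := sSup (singSet ζ m K)

/-- The second-difference operator `□K(α;y,z) = K(α) - K(α-y) - K(α-z) + K(α-y-z)`. -/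
def boxOp (K : ℝ → ℝ) (α y z : ℝ) : ℝ :=
  K α - K (α - y) - K (α - z) + K (α - y - z)

/-!
For `0 ≤ s ≤ 1`, a function of size `‖x‖ ^ s` whose derivative has size `‖x‖ ^ (s - 1)` is
`s`-Hölder: when one of `x`, `w` has norm at least `2‖x - w‖`, the segment between them stays at
distance `‖x - w‖` from the origin and the mean value inequality applies, and otherwise `f x` and
`f w` are separately of size `‖x - w‖ ^ s`. Pairing the four terms of `□K(α; y, z)` into two
increments of `K` of length `|y|`, or into two of length `|z|`, then bounds it by the smaller one.
-/

section HomogeneousBounds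

variable {E F : Type*} [NormedAddCommGroup E] [NormedAddCommGroup F]
  {f : E → F} {M s : ℝ} {x w : E}

lemma norm_sub_le_of_rpow_bound_of_near (hM : 0 ≤ M) (hs : s ∈ Set.Icc (0 : ℝ) 1)
    (hf : ∀ u, ‖f u‖ ≤ M * ‖u‖ ^ s) (hx : ‖x‖ ≤ 2 * ‖x - w‖) (hw : ‖w‖ ≤ 2 * ‖x - w‖) :
    ‖f x - f w‖ ≤ 4 * M * ‖x - w‖ ^ s := by
  have near : ∀ u : E, ‖u‖ ≤ 2 * ‖x - w‖ → ‖f u‖ ≤ M * (2 * ‖x - w‖ ^ s) := fun u hu =>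
    calc ‖f u‖ ≤ M * ‖u‖ ^ s := hf u
      _ ≤ M * (2 * ‖x - w‖) ^ s := by gcongr; exact hs.1
      _ = M * (2 ^ s * ‖x - w‖ ^ s) := by rw [Real.mul_rpow zero_le_two (norm_nonneg _)]
      _ ≤ M * (2 * ‖x - w‖ ^ s) := by
        gcongr; exact Real.rpow_le_self_of_one_le one_le_two hs.2
  linarith [norm_sub_le (f x) (f w), near x hx, near w hw]

variable [NormedSpace ℝ E] [NormedSpace ℝ F]

lemma norm_sub_le_of_fderiv_rpow_bound_of_far (hM : 0 ≤ M) (hs : s ≤ 1)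
    (hf : DifferentiableOn ℝ f {0}ᶜ) (hf₁ : ∀ u ≠ 0, ‖fderiv ℝ f u‖ ≤ M * ‖u‖ ^ (s - 1))
    (hx : 2 * ‖x - w‖ ≤ ‖x‖) :
    ‖f x - f w‖ ≤ M * ‖x - w‖ ^ s := by
  rcases eq_or_ne x w with rfl | hxw
  · simpa only [sub_self, norm_zero] using mul_nonneg hM (Real.rpow_nonneg le_rfl s)
  have hd : 0 < ‖x - w‖ := norm_sub_pos_iff.mpr hxw
  have far : ∀ u ∈ Metric.closedBall x ‖x - w‖, ‖x - w‖ ≤ ‖u‖ := fun u hu => by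
    rw [mem_closedBall_iff_norm'] at hu
    linarith [norm_sub_norm_le x u]
  have ne_zero : ∀ u ∈ Metric.closedBall x ‖x - w‖, u ≠ 0 := fun u hu =>
    norm_pos_iff.mp (hd.trans_le (far u hu))
  have mean_value : ‖f x - f w‖ ≤ M * ‖x - w‖ ^ (s - 1) * ‖x - w‖ :=
    (convex_closedBall x ‖x - w‖).norm_image_sub_le_of_norm_fderiv_le (𝕜 := ℝ)
      (fun u hu => hf.differentiableAt (isOpen_compl_singleton.mem_nhds (ne_zero u hu)))
      (fun u hu => (hf₁ u (ne_zero u hu)).trans <| mul_le_mul_of_nonneg_left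
        (Real.rpow_le_rpow_of_nonpos hd (far u hu) (sub_nonpos.mpr hs)) hM)
      (mem_closedBall_iff_norm'.mpr le_rfl) (Metric.mem_closedBall_self hd.le)
  rwa [mul_assoc, ← Real.rpow_add_one hd.ne', sub_add_cancel] at mean_value

theorem norm_sub_le_of_rpow_bounds (hM : 0 ≤ M) (hs : s ∈ Set.Icc (0 : ℝ) 1)
    (hf : DifferentiableOn ℝ f {0}ᶜ) (hf₀ : ∀ u, ‖f u‖ ≤ M * ‖u‖ ^ s)
    (hf₁ : ∀ u ≠ 0, ‖fderiv ℝ f u‖ ≤ M * ‖u‖ ^ (s - 1)) (x w : E) :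
    ‖f x - f w‖ ≤ 4 * M * ‖x - w‖ ^ s := by
  have weaken : M * ‖x - w‖ ^ s ≤ 4 * M * ‖x - w‖ ^ s := by gcongr; linarith
  rcases le_total (2 * ‖x - w‖) ‖x‖ with hx | hx
  · exact (norm_sub_le_of_fderiv_rpow_bound_of_far hM hs.2 hf hf₁ hx).trans weaken
  rcases le_total (2 * ‖x - w‖) ‖w‖ with hw | hw
  · rw [norm_sub_rev x w] at hw weaken ⊢
    rw [norm_sub_rev (f x)]
    exact (norm_sub_le_of_fderiv_rpow_bound_of_far hM hs.2 hf hf₁ hw).trans weaken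
  · exact norm_sub_le_of_rpow_bound_of_near hM hs hf₀ hx hw

end HomogeneousBounds

section SingularKernel

variable {ζ : ℝ} {m : ℕ} {K : ℝ → ℝ}

lemma singNorm_nonneg : 0 ≤ singNorm ζ m K :=
  Real.sSup_nonneg <| by
    rintro _ ⟨k, x, -, -, rfl⟩
    positivity

lemma abs_iteratedDeriv_le_singNorm_mul_rpow (hK : BddAbove (singSet ζ m K)) {k : ℕ} (hk : k ≤ m)
    {x : ℝ} (hx : x ≠ 0) :
    |iteratedDeriv k K x| ≤ singNorm ζ m K * |x| ^ (ζ - k) := by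
  have weighted : |x| ^ ((k : ℝ) - ζ) * |iteratedDeriv k K x| ≤ singNorm ζ m K :=
    le_csSup hK ⟨k, x, hk, hx, rfl⟩
  rwa [← neg_sub ζ, Real.rpow_neg (abs_nonneg x),
    inv_mul_le_iff₀' (Real.rpow_pos_of_pos (abs_pos.mpr hx) _)] at weighted

lemma abs_le_singNorm_mul_rpow (hζ : 0 ≤ ζ) (hc : ContinuousAt K 0)
    (hK : BddAbove (singSet ζ m K)) (x : ℝ) :
    |K x| ≤ singNorm ζ m K * |x| ^ ζ := by
  have off_zero : ∀ u ≠ 0, |K u| ≤ singNorm ζ m K * |u| ^ ζ := fun u hu => by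
    simpa only [iteratedDeriv_zero, Nat.cast_zero, sub_zero]
      using abs_iteratedDeriv_le_singNorm_mul_rpow hK (Nat.zero_le m) hu
  rcases eq_or_ne x 0 with rfl | hx
  · have hcont : ContinuousAt (fun u : ℝ => singNorm ζ m K * |u| ^ ζ) 0 :=
      (continuousAt_id.abs.rpow_const (Or.inr hζ)).const_mul _
    exact le_of_tendsto_of_tendsto (hc.abs.continuousWithinAt (s := {0}ᶜ))
      hcont.continuousWithinAt
      (eventually_nhdsWithin_of_forall fun u hu => off_zero u hu)
  · exact off_zero x hx

theorem abs_sub_le_singNorm_mul_rpow (hζ : ζ ∈ Set.Icc (0 : ℝ) 1) (hc : ContinuousAt K 0)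
    (hd : DifferentiableOn ℝ K {0}ᶜ) (hK : BddAbove (singSet ζ 1 K)) (x w : ℝ) :
    |K x - K w| ≤ 4 * singNorm ζ 1 K * |x - w| ^ ζ := by
  have deriv_bound : ∀ u ≠ 0, ‖fderiv ℝ K u‖ ≤ singNorm ζ 1 K * ‖u‖ ^ (ζ - 1) := fun u hu => by
    simpa only [iteratedDeriv_one, Nat.cast_one, norm_deriv_eq_norm_fderiv, ← Real.norm_eq_abs]
      using abs_iteratedDeriv_le_singNorm_mul_rpow hK le_rfl hu
  exact norm_sub_le_of_rpow_bounds singNorm_nonneg hζ hd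
    (abs_le_singNorm_mul_rpow hζ.1 hc hK) deriv_bound x w

end SingularKernel

section BoxOp

variable {K ω : ℝ → ℝ}

lemma boxOp_comm (K : ℝ → ℝ) (α y z : ℝ) : boxOp K α y z = boxOp K α z y := by
  simp only [boxOp, sub_right_comm]

lemma abs_boxOp_le_of_modulus_left (hK : ∀ x w, |K x - K w| ≤ ω |x - w|) (α y z : ℝ) :
    |boxOp K α y z| ≤ 2 * ω |y| :=
  calc |boxOp K α y z|
      = |(K α - K (α - y)) - (K (α - z) - K (α - z - y))| := by
        rw [boxOp, sub_right_comm α y z]; congr 1; ring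
    _ ≤ |K α - K (α - y)| + |K (α - z) - K (α - z - y)| := abs_sub _ _
    _ ≤ ω |y| + ω |y| := by
        simpa only [sub_sub_cancel] using
          add_le_add (hK α (α - y)) (hK (α - z) (α - z - y))
    _ = 2 * ω |y| := (two_mul _).symm

lemma abs_boxOp_le_of_modulus (hK : ∀ x w, |K x - K w| ≤ ω |x - w|) (α y z : ℝ) :
    |boxOp K α y z| ≤ 2 * ω (min |y| |z|) := by
  rcases min_choice |y| |z| with h | h <;> rw [h]
  · exact abs_boxOp_le_of_modulus_left hK α y z
  · exact boxOp_comm K α y z ▸ abs_boxOp_le_of_modulus_left hK α z y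

theorem boxOp_bound_min_general {ζ : ℝ} (hζ : ζ ∈ Set.Icc (0 : ℝ) 1) (hc : ContinuousAt K 0)
    (hd : DifferentiableOn ℝ K {0}ᶜ) (hK : BddAbove (singSet ζ 1 K)) (α y z : ℝ) :
    |boxOp K α y z| ≤ 8 * singNorm ζ 1 K * (min |y| |z|) ^ ζ :=
  calc |boxOp K α y z|
      ≤ 2 * (4 * singNorm ζ 1 K * (min |y| |z|) ^ ζ) :=
        abs_boxOp_le_of_modulus (ω := fun r => 4 * singNorm ζ 1 K * r ^ ζ)
          (abs_sub_le_singNorm_mul_rpow hζ hc hd hK) α y z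
    _ = 8 * singNorm ζ 1 K * (min |y| |z|) ^ ζ := by ring

end BoxOp

/-- For `θ ∈ (0,1)` there is `C < ∞` such that any continuous `K`, continuously
differentiable away from `0` with `‖K‖_{1-θ;1} < ∞`, satisfies
`|□K(α;y,z)| ≤ C ‖K‖_{1-θ;1} (min(|y|,|z|))^(1-θ)` for all `α, y, z`. -/
theorem boxOp_bound_min (θ : ℝ) (hθ : θ ∈ Set.Ioo (0 : ℝ) 1) :
    ∃ C : ℝ, ∀ K : ℝ → ℝ, Continuous K → ContDiffOn ℝ 1 K {(0 : ℝ)}ᶜ →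
      BddAbove (singSet (1 - θ) 1 K) →
      ∀ α y z : ℝ,
        |boxOp K α y z| ≤ C * singNorm (1 - θ) 1 K * (min |y| |z|) ^ (1 - θ) :=
  ⟨8, fun _ hc hd hK => boxOp_bound_min_general
    ⟨sub_nonneg.mpr hθ.2.le, sub_le_self 1 hθ.1.le⟩ hc.continuousAt
    (hd.differentiableOn one_ne_zero) hK⟩
end

section
/- Let α ∈ (−1,0) and let G: ℝ∖{0} → ℝ be any even function, infinitely differentiable on ℝ∖{0}, vanishing outside [−1,1], with G(x) = (1/π)log|x| for all 0 < |x| ≤ 1/2. Then there is a constant C < ∞ (depending only on α and G) such that for every bounded continuous f: ℝ → ℝ with N_α(f) < ∞, the convolution G∗f(x) = ∫_ℝ G(x−y) f(y) dy is well-defined for every x and ‖G∗f‖_{C^{α+1}} ≤ C N_α(f). -/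
open MeasureTheory

/-- A test function: `C¹`, supported in `[-1,1]`, with `sup |η| ≤ 1`. -/
def IsTestFn (η : ℝ → ℝ) : Prop :=
  ContDiff ℝ 1 η ∧ (∀ y, y ∉ Set.Icc (-1 : ℝ) 1 → η y = 0) ∧ ∀ y, |η y| ≤ 1

/-- The set whose supremum is the `C^α` distributional norm `N_α(f)`:
values `λ^(-α) |∫ f(y) λ⁻¹ η(λ⁻¹(y-x)) dy|` over centers `x`, scales `λ ∈ (0,1]`,
and test functions `η`. -/
noncomputable def distSet (α : ℝ) (f : ℝ → ℝ) : Set ℝ :=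
  {r | ∃ (x l : ℝ) (η : ℝ → ℝ), 0 < l ∧ l ≤ 1 ∧ IsTestFn η ∧
    r = l ^ (-α) * |∫ y : ℝ, f y * (l⁻¹ * η (l⁻¹ * (y - x)))|}

/-- The `C^α`-Hölder norm of `f` as a distribution. -/
noncomputable def distNorm (α : ℝ) (f : ℝ → ℝ) : ℝ := sSup (distSet α f)

/-!
The admissible test functions carry no bound on their derivative, so they can approximate `sign f`
on a ball: `N_α(f)` controls `∫_{B(x,r)} |f|` by `N_α(f) (2r)^(α+1)`, and not only oscillating
integrals of `f`. Thus `|f| dx` is locally a Frostman measure of exponent `β = α + 1 ∈ (0, 1)`.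
Since `{y | |log |a - y| - log |b - y|| > t}` lies in two balls of radius `|a - b| / (e^t - 1)`,
the layer-cake formula bounds the increments of the logarithmic potential of such a measure by
`|a - b|^β ∫₀^∞ (e^t - 1)^(-β) dt`, up to constants. The kernel `G` differs from a multiple of
`log |·|` by a Lipschitz function, so the increments of `G ∗ f` obey the same kind of bound.
Translating `G` by the width of its support makes it disjoint from itself, so the sup norm of
`G ∗ f` is controlled by one such increment.
-/

open Filter Metric Set Topology
open scoped ENNReal NNReal

section Frostman

/-- The **Frostman condition** `ν(B̄(z, r)) ≤ A r ^ β` at every centre and every scale. -/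
def IsFrostman {X : Type*} [PseudoMetricSpace X] [MeasurableSpace X] (β : ℝ) (A : ℝ≥0∞)
    (ν : Measure X) : Prop :=
  ∀ z r, 0 < r → ν (closedBall z r) ≤ A * ENNReal.ofReal (r ^ β)

lemma IsFrostman.nullSingletonClass {X : Type*} [PseudoMetricSpace X] [MeasurableSpace X] {β : ℝ}
    {A : ℝ≥0∞} {ν : Measure X} (hν : IsFrostman β A ν) (hβ : 0 < β) (hA : A ≠ ∞) :
    NullSingletonClass ν where
  measure_singleton z := by
    have hbound : Tendsto (fun r : ℝ => A * ENNReal.ofReal (r ^ β)) (𝓝[>] 0) (𝓝 0) := by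
      have hpow : Tendsto (fun r : ℝ => r ^ β) (𝓝[>] 0) (𝓝 0) := by
        simpa only [Real.zero_rpow hβ.ne'] using
          ((Real.continuous_rpow_const hβ.le).tendsto 0).mono_left nhdsWithin_le_nhds
      simpa using ENNReal.Tendsto.const_mul (ENNReal.tendsto_ofReal hpow) (Or.inr hA)
    refine le_antisymm (ge_of_tendsto hbound ?_) zero_le
    filter_upwards [self_mem_nhdsWithin] with r (hr : 0 < r)
    exact (measure_mono (singleton_subset_iff.2 (mem_closedBall_self hr.le))).trans (hν z r hr)

lemma measure_Ico_add_nat_le {μ : Measure ℝ} {B : ℝ≥0∞} (hμ : ∀ a, μ (Ico a (a + 1)) ≤ B)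
    (a : ℝ) (n : ℕ) : μ (Ico a (a + n)) ≤ n * B := by
  induction n with
  | zero => simp
  | succ n ih =>
    calc μ (Ico a (a + (n + 1 : ℕ)))
        = μ (Ico a (a + n) ∪ Ico (a + n) (a + n + 1)) := by
          rw [Ico_union_Ico_eq_Ico (by simp) (by simp)]; push_cast; ring_nf
      _ ≤ n * B + B := (measure_union_le _ _).trans (add_le_add ih (hμ _))
      _ = (n + 1 : ℕ) * B := by push_cast; ring

lemma isFrostman_restrict_closedBall {μ : Measure ℝ} {β : ℝ} {A : ℝ≥0∞} (hβ : 0 ≤ β)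
    (hμ : ∀ z r, 0 < r → r ≤ 1 / 2 → μ (closedBall z r) ≤ A * ENNReal.ofReal (r ^ β))
    (x R : ℝ) :
    IsFrostman β ((⌊2 * R⌋₊ + 1 : ℕ) * A) (μ.restrict (closedBall x R)) := by
  intro z r hr
  rcases le_or_gt r (1 / 2) with hr2 | hr2
  · calc μ.restrict (closedBall x R) (closedBall z r) ≤ μ (closedBall z r) :=
          Measure.restrict_apply_le _ _
      _ ≤ 1 * A * ENNReal.ofReal (r ^ β) := by simpa only [one_mul] using hμ z r hr hr2
      _ ≤ (⌊2 * R⌋₊ + 1 : ℕ) * A * ENNReal.ofReal (r ^ β) := by gcongr; simp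
  · have hunit (a : ℝ) : μ (Ico a (a + 1)) ≤ A * ENNReal.ofReal ((1 / 2) ^ β) := by
      refine (measure_mono fun y hy => ?_).trans (hμ (a + 1 / 2) (1 / 2) (by norm_num) le_rfl)
      rw [Real.closedBall_eq_Icc]
      constructor <;> linarith [hy.1, hy.2]
    have hcover : closedBall x R ⊆ Ico (x - R) (x - R + (⌊2 * R⌋₊ + 1 : ℕ)) := by
      intro y hy
      rw [Real.closedBall_eq_Icc] at hy
      have := Nat.lt_floor_add_one (2 * R)
      push_cast
      constructor <;> linarith [hy.1, hy.2]
    calc μ.restrict (closedBall x R) (closedBall z r)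
        ≤ μ (closedBall x R) := by
          rw [Measure.restrict_apply measurableSet_closedBall]; gcongr; exact inter_subset_right
      _ ≤ (⌊2 * R⌋₊ + 1 : ℕ) * (A * ENNReal.ofReal ((1 / 2) ^ β)) :=
          (measure_mono hcover).trans (measure_Ico_add_nat_le hunit _ _)
      _ ≤ (⌊2 * R⌋₊ + 1 : ℕ) * A * ENNReal.ofReal (r ^ β) := by
          rw [mul_assoc]; gcongr

end Frostman

section LogPotential

/-- The constant in the Hölder estimate for logarithmic potentials of `β`-Frostman measures. -/
noncomputable def logPotentialConst (β : ℝ) : ℝ≥0∞ :=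
  2 * ∫⁻ t in Ioi (0 : ℝ), ENNReal.ofReal ((Real.exp t - 1) ^ (-β))

lemma mul_exp_half_le_exp_sub_one {t : ℝ} (ht : 0 ≤ t) :
    t * Real.exp (t / 2) ≤ Real.exp t - 1 := by
  have hsinh : t / 2 ≤ Real.sinh (t / 2) := Real.self_le_sinh_iff.2 (by linarith)
  calc t * Real.exp (t / 2) ≤ 2 * Real.sinh (t / 2) * Real.exp (t / 2) := by gcongr; linarith
    _ = Real.exp (t / 2 + t / 2) - Real.exp (-(t / 2) + t / 2) := by
      rw [Real.sinh_eq, Real.exp_add, Real.exp_add]; ring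
    _ = Real.exp t - 1 := by simp

lemma logPotentialConst_ne_top {β : ℝ} (hβ : 0 < β) (hβ1 : β < 1) :
    logPotentialConst β ≠ ∞ := by
  have hdom : IntegrableOn (fun t : ℝ => t ^ (-β) * Real.exp (-(β / 2) * t)) (Ioi 0) := by
    simpa using integrableOn_rpow_mul_exp_neg_mul_rpow (p := 1) (s := -β) (b := β / 2)
      (by linarith) one_pos (by linarith)
  refine ENNReal.mul_ne_top ENNReal.ofNat_ne_top (ne_of_lt ?_)
  refine (setLIntegral_mono' measurableSet_Ioi fun t (ht : 0 < t) => ?_).trans_lt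
    hdom.lintegral_lt_top
  refine ENNReal.ofReal_le_ofReal ?_
  calc (Real.exp t - 1) ^ (-β) ≤ (t * Real.exp (t / 2)) ^ (-β) :=
        Real.rpow_le_rpow_of_nonpos (by positivity) (mul_exp_half_le_exp_sub_one ht.le)
          (by linarith)
    _ = t ^ (-β) * Real.exp (-(β / 2) * t) := by
        rw [Real.mul_rpow ht.le (Real.exp_pos _).le, ← Real.exp_mul]; ring_nf

variable {X : Type*} [MetricSpace X]

lemma dist_le_of_lt_log_dist_sub_log_dist {a b y : X} {t : ℝ} (ht : 0 < t) (hay : y ≠ a)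
    (hby : y ≠ b) (h : t < Real.log (dist y a) - Real.log (dist y b)) :
    dist y b ≤ dist a b / (Real.exp t - 1) := by
  have ha : 0 < dist y a := dist_pos.2 hay
  have hb : 0 < dist y b := dist_pos.2 hby
  have hexp : 0 < Real.exp t - 1 := sub_pos.2 (Real.one_lt_exp_iff.2 ht)
  rw [← Real.log_div ha.ne' hb.ne', Real.lt_log_iff_exp_lt (by positivity), lt_div_iff₀ hb] at h
  rw [le_div_iff₀ hexp]
  linarith [dist_triangle_right y a b]

lemma setOf_lt_abs_log_dist_sub_subset {a b : X} {t : ℝ} (ht : 0 < t) :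
    {y | t < |Real.log (dist y a) - Real.log (dist y b)|} ⊆
      closedBall a (dist a b / (Real.exp t - 1)) ∪
        closedBall b (dist a b / (Real.exp t - 1)) := by
  intro y hy
  have hr : 0 ≤ dist a b / (Real.exp t - 1) :=
    div_nonneg dist_nonneg (sub_nonneg.2 (Real.one_le_exp_iff.2 ht.le))
  rcases eq_or_ne y a with rfl | hya
  · exact Or.inl (mem_closedBall_self hr)
  rcases eq_or_ne y b with rfl | hyb
  · exact Or.inr (mem_closedBall_self hr)
  rcases lt_abs.1 hy.out with h | h
  · exact Or.inr (dist_le_of_lt_log_dist_sub_log_dist ht hya hyb h)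
  · rw [neg_sub] at h
    exact Or.inl (dist_comm a b ▸ dist_le_of_lt_log_dist_sub_log_dist ht hyb hya h)

variable [MeasurableSpace X] {ν : Measure X} {β : ℝ} {A : ℝ≥0∞}

lemma IsFrostman.measure_lt_abs_log_dist_sub_le (hν : IsFrostman β A ν) {a b : X} (hab : a ≠ b)
    {t : ℝ} (ht : 0 < t) :
    ν {y | t < |Real.log (dist y a) - Real.log (dist y b)|} ≤
      2 * A * ENNReal.ofReal (dist a b ^ β) * ENNReal.ofReal ((Real.exp t - 1) ^ (-β)) := by
  have hexp : 0 < Real.exp t - 1 := sub_pos.2 (Real.one_lt_exp_iff.2 ht)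
  have hr : 0 < dist a b / (Real.exp t - 1) := div_pos (dist_pos.2 hab) hexp
  have hrpow : (dist a b / (Real.exp t - 1)) ^ β = dist a b ^ β * (Real.exp t - 1) ^ (-β) := by
    rw [Real.div_rpow dist_nonneg hexp.le, Real.rpow_neg hexp.le, div_eq_mul_inv]
  calc ν {y | t < |Real.log (dist y a) - Real.log (dist y b)|}
      ≤ ν (closedBall a (dist a b / (Real.exp t - 1))) +
          ν (closedBall b (dist a b / (Real.exp t - 1))) :=
        (measure_mono (setOf_lt_abs_log_dist_sub_subset ht)).trans (measure_union_le _ _)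
    _ ≤ A * ENNReal.ofReal ((dist a b / (Real.exp t - 1)) ^ β) +
          A * ENNReal.ofReal ((dist a b / (Real.exp t - 1)) ^ β) :=
        add_le_add (hν a _ hr) (hν b _ hr)
    _ = 2 * A * ENNReal.ofReal (dist a b ^ β) * ENNReal.ofReal ((Real.exp t - 1) ^ (-β)) := by
        rw [hrpow, ENNReal.ofReal_mul (by positivity)]; ring

lemma IsFrostman.lintegral_abs_log_dist_sub_le [OpensMeasurableSpace X] (hν : IsFrostman β A ν)
    (a b : X) :
    ∫⁻ y, ENNReal.ofReal |Real.log (dist y a) - Real.log (dist y b)| ∂ν ≤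
      logPotentialConst β * A * ENNReal.ofReal (dist a b ^ β) := by
  rcases eq_or_ne a b with rfl | hab
  · simp
  have hlog (c : X) : Measurable fun y => Real.log (dist y c) :=
    (continuous_id.dist continuous_const).measurable.log
  calc ∫⁻ y, ENNReal.ofReal |Real.log (dist y a) - Real.log (dist y b)| ∂ν
      = ∫⁻ t in Ioi (0 : ℝ), ν {y | t < |Real.log (dist y a) - Real.log (dist y b)|} :=
        lintegral_eq_lintegral_meas_lt ν (.of_forall fun _ => abs_nonneg _)
          ((hlog a).sub (hlog b)).abs.aemeasurable
    _ ≤ ∫⁻ t in Ioi (0 : ℝ), 2 * A * ENNReal.ofReal (dist a b ^ β) *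
          ENNReal.ofReal ((Real.exp t - 1) ^ (-β)) :=
        setLIntegral_mono' measurableSet_Ioi fun t ht =>
          hν.measure_lt_abs_log_dist_sub_le hab ht
    _ = logPotentialConst β * A * ENNReal.ofReal (dist a b ^ β) := by
        rw [lintegral_const_mul _ (by fun_prop), logPotentialConst]; ring

end LogPotential

section Mollification

open scoped Convolution Pointwise

variable {E F : Type*} [NormedAddCommGroup E] [NormedSpace ℝ E] [FiniteDimensional ℝ E]
  [MeasurableSpace E] [BorelSpace E] {μ : Measure E} [μ.IsAddHaarMeasure]
  [NormedAddCommGroup F] [NormedSpace ℝ F]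

lemma norm_normed_convolution_le (φ : ContDiffBump (0 : E)) {g : E → F} {M : ℝ}
    (hM : ∀ y, ‖g y‖ ≤ M) (x : E) :
    ‖(φ.normed μ ⋆[ContinuousLinearMap.lsmul ℝ ℝ, μ] g) x‖ ≤ M := by
  calc ‖(φ.normed μ ⋆[ContinuousLinearMap.lsmul ℝ ℝ, μ] g) x‖
      ≤ ∫ y, φ.normed μ y * M ∂μ := by
        refine norm_integral_le_of_norm_le (φ.integrable_normed.mul_const M)
          (.of_forall fun y => ?_)
        rw [ContinuousLinearMap.lsmul_apply, norm_smul, Real.norm_of_nonneg (φ.nonneg_normed y)]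
        exact mul_le_mul_of_nonneg_left (hM _) (φ.nonneg_normed y)
    _ = M := by rw [integral_mul_const, φ.integral_normed, one_mul]

lemma exists_contDiff_ae_tendsto_of_norm_le [CompleteSpace F] {g : E → F} {M ε : ℝ}
    (hg : AEStronglyMeasurable g μ) (hM : ∀ y, ‖g y‖ ≤ M) (hε : 0 < ε) (n : ℕ∞) :
    ∃ ψ : ℕ → E → F,
      (∀ i, ContDiff ℝ n (ψ i) ∧ Function.support (ψ i) ⊆ thickening ε (Function.support g) ∧
        ∀ y, ‖ψ i y‖ ≤ M) ∧
      ∀ᵐ y ∂μ, Tendsto (fun i => ψ i y) atTop (𝓝 (g y)) := by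
  have hgloc : LocallyIntegrable g μ :=
    (locallyIntegrable_const M).mono hg (.of_forall fun y => (hM y).trans (le_abs_self M))
  let φ (i : ℕ) : ContDiffBump (0 : E) :=
    { rIn := ε / (i + 1) / 2
      rOut := ε / (i + 1)
      rIn_pos := by positivity
      rIn_lt_rOut := half_lt_self (by positivity) }
  have hφ_tendsto : Tendsto (fun i => (φ i).rOut) atTop (𝓝 0) :=
    tendsto_const_div_atTop_nhds_zero_nat ε |>.comp (tendsto_add_atTop_nat 1) |>.congr
      fun i => by simp [φ]
  refine ⟨fun i => (φ i).normed μ ⋆[ContinuousLinearMap.lsmul ℝ ℝ, μ] g,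
    fun i => ⟨?_, ?_, norm_normed_convolution_le (φ i) hM⟩,
    ContDiffBump.ae_convolution_tendsto_right_of_locallyIntegrable hφ_tendsto (K := 2)
      (.of_forall fun i => (mul_div_cancel₀ (φ i).rOut two_ne_zero).ge) hgloc⟩
  · exact (φ i).hasCompactSupport_normed.contDiff_convolution_left _ (φ i).contDiff_normed hgloc
  · have hrOut : (φ i).rOut ≤ ε := div_le_self hε.le (by simp)
    calc Function.support ((φ i).normed μ ⋆[ContinuousLinearMap.lsmul ℝ ℝ, μ] g)
        ⊆ ball 0 (φ i).rOut + Function.support g :=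
          (φ i).support_normed_eq (μ := μ) ▸ support_convolution_subset _
      _ = thickening (φ i).rOut (Function.support g) := ball_add_zero _ _
      _ ⊆ thickening ε (Function.support g) := thickening_mono hrOut _

lemma exists_contDiff_tendsto_integral_mul {f : E → ℝ} (hf : LocallyIntegrable f μ) {s : Set E}
    (hs : MeasurableSet s) (hs_bdd : Bornology.IsBounded s) {ε : ℝ} (hε : 0 < ε) (n : ℕ∞) :
    ∃ ψ : ℕ → E → ℝ,
      (∀ i, ContDiff ℝ n (ψ i) ∧ Function.support (ψ i) ⊆ thickening ε s ∧ ∀ y, |ψ i y| ≤ 1) ∧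
      Tendsto (fun i => ∫ y, f y * ψ i y ∂μ) atTop (𝓝 (∫ y in s, |f y| ∂μ)) := by
  let g : E → ℝ := s.indicator fun y => f y / |f y|
  have hg_meas : AEStronglyMeasurable g μ :=
    (hf.aestronglyMeasurable.aemeasurable.div
      hf.aestronglyMeasurable.norm.aemeasurable).aestronglyMeasurable.indicator hs
  have hg_le (y : E) : ‖g y‖ ≤ 1 := by
    refine (norm_indicator_le_norm_self _ y).trans ?_
    rw [norm_div, Real.norm_eq_abs, Real.norm_eq_abs, abs_abs]
    exact div_self_le_one _
  have hfg (y : E) : f y * g y = s.indicator (fun y => |f y|) y := by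
    rw [← indicator_mul_right]
    congr 1 with y
    rw [← mul_div_assoc, ← abs_mul_abs_self, mul_self_div_self]
  obtain ⟨ψ, hψ, hψ_tendsto⟩ := exists_contDiff_ae_tendsto_of_norm_le hg_meas hg_le hε n
  have hψ_supp (i : ℕ) : Function.support (ψ i) ⊆ thickening ε s :=
    (hψ i).2.1.trans (thickening_subset_of_subset _ support_indicator_subset)
  have hdom (i : ℕ) (y : E) : ‖f y * ψ i y‖ ≤ (thickening ε s).indicator (fun y => |f y|) y := by
    by_cases hy : y ∈ thickening ε s
    · rw [indicator_of_mem hy, norm_mul]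
      exact mul_le_of_le_one_right (abs_nonneg _) ((hψ i).2.2 y)
    · rw [indicator_of_notMem hy, Function.notMem_support.1 fun h => hy (hψ_supp i h)]
      simp
  have hf_int : IntegrableOn f (thickening ε s) μ :=
    (hf.integrableOn_isCompact (isCompact_of_isClosed_isBounded isClosed_cthickening
      hs_bdd.cthickening)).mono_set (thickening_subset_cthickening ε s)
  refine ⟨ψ, fun i => ⟨(hψ i).1, hψ_supp i, (hψ i).2.2⟩, ?_⟩
  rw [← integral_indicator hs]
  simp only [← hfg]
  exact tendsto_integral_of_dominated_convergence _
    (fun i => hf.aestronglyMeasurable.mul (hψ i).1.continuous.aestronglyMeasurable)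
    ((integrable_indicator_iff isOpen_thickening.measurableSet).2 hf_int.abs)
    (fun i => .of_forall (hdom i)) (hψ_tendsto.mono fun y hy => hy.const_mul (f y))

end Mollification

section DistNorm

variable {α : ℝ} {f : ℝ → ℝ}

lemma distNorm_nonneg (α : ℝ) (f : ℝ → ℝ) : 0 ≤ distNorm α f := by
  refine Real.sSup_nonneg ?_
  rintro _ ⟨x, l, η, hl, -, -, rfl⟩
  positivity

lemma isTestFn_comp_rescale {ψ : ℝ → ℝ} {x l : ℝ} (hl : 0 < l) (hψ : ContDiff ℝ 1 ψ)
    (hsupp : Function.support ψ ⊆ closedBall x l) (hle : ∀ y, |ψ y| ≤ 1) :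
    IsTestFn fun u => ψ (x + l * u) := by
  refine ⟨hψ.comp (by fun_prop), fun u hu => ?_, fun u => hle _⟩
  rw [← Function.notMem_support]
  refine fun hmem => hu ?_
  have hdist := hsupp hmem
  rwa [mem_closedBall, Real.dist_eq, add_sub_cancel_left, abs_mul, abs_of_pos hl,
    mul_le_iff_le_one_right hl, abs_le] at hdist

lemma abs_integral_mul_le_distNorm (hb : BddAbove (distSet α f)) {ψ : ℝ → ℝ} {x l : ℝ}
    (hl : 0 < l) (hl1 : l ≤ 1) (hψ : ContDiff ℝ 1 ψ)
    (hsupp : Function.support ψ ⊆ closedBall x l) (hle : ∀ y, |ψ y| ≤ 1) :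
    |∫ y, f y * ψ y| ≤ distNorm α f * l ^ (α + 1) := by
  have hmem : l ^ (-α) * |∫ y, f y * (l⁻¹ * ψ (x + l * (l⁻¹ * (y - x))))| ≤ distNorm α f :=
    le_csSup hb ⟨x, l, _, hl, hl1, isTestFn_comp_rescale hl hψ hsupp hle, rfl⟩
  have hpow : l ^ (-α) * l⁻¹ = (l ^ (α + 1))⁻¹ := by
    rw [← Real.rpow_neg_one l, ← Real.rpow_add hl, ← Real.rpow_neg hl.le]; ring_nf
  simp only [mul_inv_cancel_left₀ hl.ne', add_sub_cancel, mul_left_comm _ l⁻¹,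
    integral_const_mul] at hmem
  rwa [abs_mul, abs_of_pos (inv_pos.2 hl), ← mul_assoc, hpow, inv_mul_le_iff₀ (by positivity),
    mul_comm] at hmem

lemma setIntegral_abs_le_distNorm (hf : LocallyIntegrable f) (hb : BddAbove (distSet α f))
    (x : ℝ) {r l : ℝ} (hr : 0 ≤ r) (hrl : r < l) (hl1 : l ≤ 1) :
    ∫ y in closedBall x r, |f y| ≤ distNorm α f * l ^ (α + 1) := by
  obtain ⟨ψ, hψ, hlim⟩ := exists_contDiff_tendsto_integral_mul hf measurableSet_closedBall
    (isBounded_closedBall (x := x) (r := r)) (sub_pos.2 hrl) 1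
  have hψ_supp (i : ℕ) : Function.support (ψ i) ⊆ closedBall x l :=
    calc Function.support (ψ i) ⊆ thickening (l - r) (closedBall x r) := (hψ i).2.1
      _ = ball x l := by rw [thickening_closedBall (sub_pos.2 hrl) hr, sub_add_cancel]
      _ ⊆ closedBall x l := ball_subset_closedBall
  exact le_of_tendsto' hlim fun i => (le_abs_self _).trans <|
    abs_integral_mul_le_distNorm hb (hr.trans_lt hrl) hl1 (hψ i).1 (hψ_supp i) (hψ i).2.2

lemma isFrostman_withDensity_enorm (hα : -1 ≤ α) (hf : LocallyIntegrable f)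
    (hb : BddAbove (distSet α f)) (x R : ℝ) :
    IsFrostman (α + 1)
      ((⌊2 * R⌋₊ + 1 : ℕ) * ENNReal.ofReal (distNorm α f * 2 ^ (α + 1)))
      ((volume.withDensity fun y => ‖f y‖ₑ).restrict (closedBall x R)) := by
  refine isFrostman_restrict_closedBall (by linarith) (fun z r hr hr2 => ?_) x R
  have hpow : distNorm α f * (2 * r) ^ (α + 1) = distNorm α f * 2 ^ (α + 1) * r ^ (α + 1) := by
    rw [Real.mul_rpow zero_le_two hr.le, mul_assoc]
  rw [withDensity_apply _ measurableSet_closedBall,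
    ← ofReal_integral_norm_eq_lintegral_enorm
      (hf.integrableOn_isCompact (isCompact_closedBall z r)),
    ← ENNReal.ofReal_mul (mul_nonneg (distNorm_nonneg α f) (by positivity)), ← hpow]
  exact ENNReal.ofReal_le_ofReal
    (setIntegral_abs_le_distNorm hf hb z hr.le (by linarith) (by linarith))

end DistNorm

section LogKernel

/-- `G` is **log-Lipschitz** with constant `K`: away from the origin its increments are controlled
by those of `log |·|` and of the identity. This is the regularity of a kernel which is the sum of
a multiple of `log |·|` and a Lipschitz function; the value `G 0` is left unconstrained. -/
def IsLogLipschitzWith (K : ℝ≥0) (G : ℝ → ℝ) : Prop :=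
  ∀ u v, u ≠ 0 → v ≠ 0 → |G u - G v| ≤ K * (|Real.log u - Real.log v| + |u - v|)

variable {G : ℝ → ℝ} {K : ℝ≥0}

lemma IsLogLipschitzWith.measurable (hG : IsLogLipschitzWith K G) : Measurable G := by
  refine measurable_of_continuousOn_compl_singleton 0 fun u (hu : u ≠ 0) => ?_
  have hbound : Tendsto (fun v => K * (|Real.log v - Real.log u| + |v - u|)) (𝓝 u) (𝓝 0) := by
    have hlog := ((Real.continuousAt_log hu).sub_const (Real.log u)).abs
    simpa using ((hlog.add (continuousAt_id.sub_const u).abs).const_mul (K : ℝ))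
  refine (tendsto_iff_dist_tendsto_zero.2 <| squeeze_zero' (.of_forall fun _ => dist_nonneg) ?_
    (hbound.mono_left nhdsWithin_le_nhds))
  filter_upwards [self_mem_nhdsWithin] with v hv
  exact hG v u hv hu

lemma isLogLipschitzWith_of_lipschitzWith {S : ℝ → ℝ} {c : ℝ} (hS : LipschitzWith K S)
    (hGS : ∀ u, u ≠ 0 → G u = c * Real.log u + S u) : IsLogLipschitzWith (max ‖c‖₊ K) G := by
  intro u v hu hv
  calc |G u - G v| = |c * (Real.log u - Real.log v) + (S u - S v)| := by
        rw [hGS u hu, hGS v hv]; ring_nf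
    _ ≤ |c| * |Real.log u - Real.log v| + K * |u - v| :=
        (abs_add_le _ _).trans (add_le_add (abs_mul _ _).le (hS.dist_le_mul u v))
    _ ≤ (max ‖c‖₊ K : ℝ≥0) * |Real.log u - Real.log v| + (max ‖c‖₊ K : ℝ≥0) * |u - v| := by
        gcongr
        · exact NNReal.coe_le_coe.2 (le_max_left ‖c‖₊ K)
        · exact le_max_right _ _
    _ = (max ‖c‖₊ K : ℝ≥0) * (|Real.log u - Real.log v| + |u - v|) := (mul_add _ _ _).symm

lemma contDiff_update_sub_log {c : ℝ} (hG : ContDiffOn ℝ 1 G {0}ᶜ)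
    (hlog : ∀ᶠ x in 𝓝[≠] 0, G x = c * Real.log x) :
    ContDiff ℝ 1 (Function.update (fun x => G x - c * Real.log x) 0 0) := by
  rw [contDiff_iff_contDiffAt]
  intro z
  rcases eq_or_ne z 0 with rfl | hz
  · refine (contDiffAt_const (c := (0 : ℝ))).congr_of_eventuallyEq ?_
    filter_upwards [eventually_nhdsWithin_iff.1 hlog] with y hy
    rcases eq_or_ne y 0 with rfl | hy0
    · simp
    · rw [Function.update_of_ne hy0, hy hy0, sub_self]
  · have hz_nhds : {(0 : ℝ)}ᶜ ∈ 𝓝 z := isOpen_compl_singleton.mem_nhds hz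
    refine ((hG.contDiffAt hz_nhds).sub
      ((contDiffAt_const (c := c)).mul (Real.contDiffAt_log.2 hz))).congr_of_eventuallyEq ?_
    filter_upwards [hz_nhds] with y hy
    exact Function.update_of_ne hy _ _

lemma exists_lipschitzWith_of_eqOn_log {S : ℝ → ℝ} {c R : ℝ} (hS : ContDiff ℝ 1 S) (hR : 0 < R)
    (hlog : ∀ z, R < |z| → S z = c * Real.log z) : ∃ K, LipschitzWith K S := by
  obtain ⟨M, hM⟩ := (isCompact_closedBall (0 : ℝ) R).exists_bound_of_continuousOn
    (hS.continuous_deriv le_rfl).continuousOn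
  have hfar (z : ℝ) (hz : R < |z|) : ‖deriv S z‖ ≤ |c| / R := by
    have hloc : S =ᶠ[𝓝 z] fun z => c * Real.log z := by
      filter_upwards [continuous_abs.continuousAt.eventually (lt_mem_nhds hz)] using hlog
    rw [hloc.deriv_eq, deriv_const_mul_field, Real.deriv_log, norm_mul, norm_inv,
      ← div_eq_mul_inv]
    exact div_le_div_of_nonneg_left (abs_nonneg c) hR hz.le
  refine ⟨(max M (|c| / R)).toNNReal, lipschitzWith_of_nnnorm_deriv_le
    (hS.differentiable one_ne_zero) fun z => NNReal.le_toNNReal_of_coe_le ?_⟩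
  rcases le_or_gt |z| R with hz | hz
  · exact (hM z (by simpa using hz)).trans (le_max_left _ _)
  · exact (hfar z hz).trans (le_max_right _ _)

lemma exists_isLogLipschitzWith {c ε : ℝ} (hG : ContDiffOn ℝ 1 G {0}ᶜ)
    (hGsupp : HasCompactSupport G) (hε : 0 < ε)
    (hGlog : ∀ x, 0 < |x| → |x| ≤ ε → G x = c * Real.log |x|) : ∃ K, IsLogLipschitzWith K G := by
  have hlog : ∀ᶠ x in 𝓝[≠] 0, G x = c * Real.log x := by
    filter_upwards [self_mem_nhdsWithin,
      nhdsWithin_le_nhds (closedBall_mem_nhds (0 : ℝ) hε)] with x hx0 hx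
    rw [hGlog x (abs_pos.2 hx0) (mem_closedBall_zero_iff.1 hx), Real.log_abs]
  obtain ⟨R, hR, hGR⟩ := hGsupp.exists_pos_le_norm
  obtain ⟨K, hK⟩ := exists_lipschitzWith_of_eqOn_log (c := -c) (contDiff_update_sub_log hG hlog)
    hR fun z hz => by
      rw [Function.update_of_ne (abs_pos.1 (hR.trans hz)), hGR z hz.le]; ring
  exact ⟨_, isLogLipschitzWith_of_lipschitzWith (c := c) hK fun u hu => by
    rw [Function.update_of_ne hu]; ring⟩

lemma IsLogLipschitzWith.lintegral_enorm_sub_le (hG : IsLogLipschitzWith K G) {ν : Measure ℝ}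
    [NullSingletonClass ν] {β : ℝ} {A : ℝ≥0∞} (hν : IsFrostman β A ν) (a b : ℝ) :
    ∫⁻ y, ‖G (a - y) - G (b - y)‖ₑ ∂ν ≤
      K * (logPotentialConst β * A * ENNReal.ofReal (|a - b| ^ β) +
        ENNReal.ofReal |a - b| * ν univ) := by
  have hpt : ∀ᵐ y ∂ν, ‖G (a - y) - G (b - y)‖ₑ ≤
      K * (ENNReal.ofReal |Real.log (dist y a) - Real.log (dist y b)| +
        ENNReal.ofReal |a - b|) := by
    filter_upwards [Measure.ae_ne ν a, Measure.ae_ne ν b] with y hya hyb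
    have hle := hG (a - y) (b - y) (sub_ne_zero.2 hya.symm) (sub_ne_zero.2 hyb.symm)
    rw [sub_sub_sub_cancel_right, ← Real.log_abs (a - y), ← Real.log_abs (b - y)] at hle
    rw [← ENNReal.ofReal_add (abs_nonneg _) (abs_nonneg _), ← ENNReal.ofReal_coe_nnreal,
      ← ENNReal.ofReal_mul K.coe_nonneg, Real.enorm_eq_ofReal_abs, dist_comm y a, dist_comm y b]
    exact ENNReal.ofReal_le_ofReal hle
  calc ∫⁻ y, ‖G (a - y) - G (b - y)‖ₑ ∂ν
      ≤ ∫⁻ y, K * (ENNReal.ofReal |Real.log (dist y a) - Real.log (dist y b)| +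
          ENNReal.ofReal |a - b|) ∂ν := lintegral_mono_ae hpt
    _ = K * (∫⁻ y, ENNReal.ofReal |Real.log (dist y a) - Real.log (dist y b)| ∂ν +
          ENNReal.ofReal |a - b| * ν univ) := by
        rw [lintegral_const_mul' _ _ ENNReal.coe_ne_top, lintegral_add_right _ measurable_const,
          lintegral_const]
    _ ≤ _ := by
        gcongr
        exact hν.lintegral_abs_log_dist_sub_le a b

lemma le_rpow_one_sub_mul_rpow {h H β : ℝ} (hh : 0 ≤ h) (hH : h ≤ H) (hβ : 0 ≤ β)
    (hβ1 : β ≤ 1) : h ≤ H ^ (1 - β) * h ^ β := by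
  calc h = h ^ (1 - β) * h ^ β := by
        rw [← Real.rpow_add_of_nonneg hh (by linarith) hβ, sub_add_cancel, Real.rpow_one]
    _ ≤ H ^ (1 - β) * h ^ β := by gcongr

lemma IsLogLipschitzWith.setLIntegral_enorm_sub_le (hG : IsLogLipschitzWith K G)
    {μ : Measure ℝ} {β : ℝ} (hβ : 0 < β) (hβ1 : β ≤ 1) {A : ℝ≥0∞} (hA : A ≠ ∞) {a b ρ H : ℝ}
    (hρ : 0 < ρ) (hH : |a - b| ≤ H) (hμ : IsFrostman β A (μ.restrict (closedBall a ρ))) :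
    ∫⁻ y in closedBall a ρ, ‖G (a - y) - G (b - y)‖ₑ ∂μ ≤
      K * (logPotentialConst β + ENNReal.ofReal (H ^ (1 - β) * ρ ^ β)) * A *
        ENNReal.ofReal (|a - b| ^ β) := by
  have := hμ.nullSingletonClass hβ hA
  have hmass : μ.restrict (closedBall a ρ) univ ≤ A * ENNReal.ofReal (ρ ^ β) := by
    simpa only [Measure.restrict_apply_univ, Measure.restrict_apply_self] using hμ a ρ hρ
  have hdist : ENNReal.ofReal |a - b| ≤
      ENNReal.ofReal (H ^ (1 - β)) * ENNReal.ofReal (|a - b| ^ β) := by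
    rw [← ENNReal.ofReal_mul' (by positivity)]
    exact ENNReal.ofReal_le_ofReal (le_rpow_one_sub_mul_rpow (abs_nonneg _) hH hβ.le hβ1)
  calc ∫⁻ y in closedBall a ρ, ‖G (a - y) - G (b - y)‖ₑ ∂μ
      ≤ K * (logPotentialConst β * A * ENNReal.ofReal (|a - b| ^ β) +
          ENNReal.ofReal (H ^ (1 - β)) * ENNReal.ofReal (|a - b| ^ β) *
            (A * ENNReal.ofReal (ρ ^ β))) := by
        refine (hG.lintegral_enorm_sub_le hμ a b).trans ?_
        gcongr
    _ = K * (logPotentialConst β + ENNReal.ofReal (H ^ (1 - β) * ρ ^ β)) * A *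
          ENNReal.ofReal (|a - b| ^ β) := by
        rw [ENNReal.ofReal_mul' (by positivity)]; ring

end LogKernel

section Schauder

variable {α : ℝ} {G : ℝ → ℝ} {K : ℝ≥0} {R : ℝ}

lemma lintegral_enorm_sub_mul_eq_setLIntegral_withDensity (hG : Measurable G)
    (hGR : ∀ z, R ≤ |z| → G z = 0) {f : ℝ → ℝ} (hf : AEMeasurable f) {a b H : ℝ}
    (hab : |a - b| ≤ H) :
    ∫⁻ y, ‖(G (a - y) - G (b - y)) * f y‖ₑ =
      ∫⁻ y in closedBall a (R + H), ‖G (a - y) - G (b - y)‖ₑ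
        ∂volume.withDensity fun y => ‖f y‖ₑ := by
  have hsupp : (Function.support fun y => ‖G (a - y) - G (b - y)‖ₑ) ⊆ closedBall a (R + H) := by
    intro y hy
    contrapose! hy
    rw [mem_closedBall, dist_comm, Real.dist_eq, not_le] at hy
    have hb : |a - y| ≤ |a - b| + |b - y| := abs_sub_le a b y
    have hH : 0 ≤ H := (abs_nonneg _).trans hab
    simp [hGR (a - y) (by linarith), hGR (b - y) (by linarith)]
  rw [setLIntegral_eq_of_support_subset hsupp,
    lintegral_withDensity_eq_lintegral_mul₀ hf.enorm (by fun_prop)]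
  simp only [enorm_mul, mul_comm, Pi.mul_apply]

lemma exists_lintegral_enorm_sub_mul_le (hα : α ∈ Ioo (-1 : ℝ) 0) (hG : IsLogLipschitzWith K G)
    (hR : 0 < R) (hGR : ∀ z, R ≤ |z| → G z = 0) {H : ℝ} (hH : 0 ≤ H) :
    ∃ C : ℝ≥0, ∀ f : ℝ → ℝ, LocallyIntegrable f → BddAbove (distSet α f) →
      ∀ a b, |a - b| ≤ H → ∫⁻ y, ‖(G (a - y) - G (b - y)) * f y‖ₑ ≤
        ENNReal.ofReal (C * distNorm α f * |a - b| ^ (α + 1)) := by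
  have hβ : 0 < α + 1 := by linarith [hα.1]
  have hβ1 : α + 1 < 1 := by linarith [hα.2]
  set C : ℝ≥0∞ := K * (logPotentialConst (α + 1) +
    ENNReal.ofReal (H ^ (1 - (α + 1)) * (R + H) ^ (α + 1))) *
      ((⌊2 * (R + H)⌋₊ + 1 : ℕ) * ENNReal.ofReal (2 ^ (α + 1))) with hC_def
  have hC : C ≠ ∞ := by
    have := logPotentialConst_ne_top hβ hβ1
    finiteness
  refine ⟨C.toNNReal, fun f hf hb a b hab => ?_⟩
  calc ∫⁻ y, ‖(G (a - y) - G (b - y)) * f y‖ₑ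
      = ∫⁻ y in closedBall a (R + H), ‖G (a - y) - G (b - y)‖ₑ
          ∂volume.withDensity fun y => ‖f y‖ₑ :=
        lintegral_enorm_sub_mul_eq_setLIntegral_withDensity hG.measurable hGR
          hf.aestronglyMeasurable.aemeasurable hab
    _ ≤ K * (logPotentialConst (α + 1) +
          ENNReal.ofReal (H ^ (1 - (α + 1)) * (R + H) ^ (α + 1))) *
            ((⌊2 * (R + H)⌋₊ + 1 : ℕ) * ENNReal.ofReal (distNorm α f * 2 ^ (α + 1))) *
              ENNReal.ofReal (|a - b| ^ (α + 1)) :=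
        hG.setLIntegral_enorm_sub_le hβ hβ1.le (by finiteness) (by positivity) hab
          (isFrostman_withDensity_enorm hα.1.le hf hb a (R + H))
    _ = C * ENNReal.ofReal (distNorm α f) * ENNReal.ofReal (|a - b| ^ (α + 1)) := by
        rw [hC_def, ENNReal.ofReal_mul (distNorm_nonneg α f)]; ring
    _ = ENNReal.ofReal (C.toNNReal * distNorm α f * |a - b| ^ (α + 1)) := by
        rw [ENNReal.ofReal_mul' (by positivity), ENNReal.ofReal_mul C.toNNReal.coe_nonneg,
          ENNReal.ofReal_coe_nnreal, ENNReal.coe_toNNReal hC]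

lemma exists_lintegral_enorm_mul_le (hα : α ∈ Ioo (-1 : ℝ) 0) (hG : IsLogLipschitzWith K G)
    (hR : 0 < R) (hGR : ∀ z, R ≤ |z| → G z = 0) :
    ∃ C : ℝ≥0, ∀ f : ℝ → ℝ, LocallyIntegrable f → BddAbove (distSet α f) →
      ∀ x, ∫⁻ y, ‖G (x - y) * f y‖ₑ ≤ ENNReal.ofReal (C * distNorm α f) := by
  obtain ⟨C, hC⟩ := exists_lintegral_enorm_sub_mul_le hα hG hR hGR (H := 2 * R) (by positivity)
  refine ⟨C * (2 * R).toNNReal ^ (α + 1), fun f hf hb x => ?_⟩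
  have hshift : |x - (x + 2 * R)| = 2 * R := by
    rw [sub_add_cancel_left, abs_neg, abs_of_pos (by positivity)]
  have hpt (y : ℝ) : ‖G (x - y)‖ₑ ≤ ‖G (x - y) - G (x + 2 * R - y)‖ₑ := by
    rcases le_or_gt R |x - y| with hy | hy
    · simp [hGR _ hy]
    · rw [hGR (x + 2 * R - y) (le_abs.2 (Or.inl (by linarith [(abs_lt.1 hy).1]))), sub_zero]
  calc ∫⁻ y, ‖G (x - y) * f y‖ₑ
      ≤ ∫⁻ y, ‖(G (x - y) - G (x + 2 * R - y)) * f y‖ₑ := by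
        refine lintegral_mono fun y => ?_
        simp only [enorm_mul]
        gcongr
        exact hpt y
    _ ≤ ENNReal.ofReal (C * distNorm α f * |x - (x + 2 * R)| ^ (α + 1)) :=
        hC f hf hb x _ hshift.le
    _ = ENNReal.ofReal ((C * (2 * R).toNNReal ^ (α + 1) : ℝ≥0) * distNorm α f) := by
        rw [hshift, NNReal.coe_mul, NNReal.coe_rpow, Real.coe_toNNReal _ (by positivity)]
        ring_nf

lemma norm_integral_le_of_lintegral_enorm_le {X E : Type*} [MeasurableSpace X]
    [NormedAddCommGroup E] [NormedSpace ℝ E] {μ : Measure X} {g : X → E} {B : ℝ} (hB : 0 ≤ B)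
    (h : ∫⁻ y, ‖g y‖ₑ ∂μ ≤ ENNReal.ofReal B) : ‖∫ y, g y ∂μ‖ ≤ B := by
  rw [← ENNReal.ofReal_le_ofReal_iff hB, ofReal_norm]
  exact (enorm_integral_le_lintegral_enorm g).trans h

theorem greens_function_schauder_general (hα : α ∈ Ioo (-1 : ℝ) 0)
    (hG : IsLogLipschitzWith K G) (hGsupp : HasCompactSupport G) :
    ∃ C : ℝ, ∀ f : ℝ → ℝ, LocallyIntegrable f → BddAbove (distSet α f) →
      (∀ x : ℝ, Integrable (fun y => G (x - y) * f y)) ∧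
      ∀ x x' y' : ℝ, x' ≠ y' → |x' - y'| ≤ 1 →
        |∫ y : ℝ, G (x - y) * f y| +
            |(∫ y : ℝ, G (x' - y) * f y) - ∫ y : ℝ, G (y' - y) * f y| /
              |x' - y'| ^ (α + 1)
          ≤ C * distNorm α f := by
  obtain ⟨R, hR, hGR⟩ := hGsupp.exists_pos_le_norm
  obtain ⟨C₀, hC₀⟩ := exists_lintegral_enorm_mul_le hα hG hR hGR
  obtain ⟨C₁, hC₁⟩ := exists_lintegral_enorm_sub_mul_le hα hG hR hGR zero_le_one
  refine ⟨C₀ + C₁, fun f hf hb => ?_⟩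
  have hN := distNorm_nonneg α f
  have hint (x : ℝ) : Integrable fun y => G (x - y) * f y :=
    ⟨(hG.measurable.comp (measurable_const.sub measurable_id)).aestronglyMeasurable.mul
      hf.aestronglyMeasurable, (hC₀ f hf hb x).trans_lt ENNReal.ofReal_lt_top⟩
  refine ⟨hint, fun x x' y' hne hle => ?_⟩
  have hsup : |∫ y, G (x - y) * f y| ≤ C₀ * distNorm α f :=
    norm_integral_le_of_lintegral_enorm_le (by positivity) (hC₀ f hf hb x)
  have hincr : |(∫ y, G (x' - y) * f y) - ∫ y, G (y' - y) * f y| ≤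
      C₁ * distNorm α f * |x' - y'| ^ (α + 1) := by
    rw [← integral_sub (hint x') (hint y')]
    simp only [← sub_mul]
    exact norm_integral_le_of_lintegral_enorm_le (by positivity) (hC₁ f hf hb x' y' hle)
  have hpos : 0 < |x' - y'| := abs_pos.2 (sub_ne_zero.2 hne)
  rw [add_mul]
  exact add_le_add hsup ((div_le_iff₀ (Real.rpow_pos_of_pos hpos _)).2 hincr)

end Schauder

/-- Schauder estimate for the approximate Green's function `G` of the half-Laplacian:
for `α ∈ (-1,0)` and `G` even, smooth away from `0`, supported in `[-1,1]` and equal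
to `(1/π)log|·|` near `0`, there is `C < ∞` such that for every bounded continuous `f`
with `N_α(f) < ∞`, the convolution `G∗f` is well-defined and
`‖G∗f‖_{C^(α+1)} ≤ C N_α(f)` (the `C^(α+1)` norm being the sup norm plus the
Hölder seminorm, expressed here pointwise). -/
theorem greens_function_schauder (α : ℝ) (hα : α ∈ Set.Ioo (-1 : ℝ) 0)
    (G : ℝ → ℝ) (hGeven : ∀ x, G (-x) = G x) (hGsmooth : ContDiffOn ℝ (⊤ : ℕ∞) G {(0 : ℝ)}ᶜ)
    (hGsupp : ∀ x, x ∉ Set.Icc (-1 : ℝ) 1 → G x = 0)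
    (hGlog : ∀ x : ℝ, 0 < |x| → |x| ≤ 1 / 2 → G x = (1 / Real.pi) * Real.log |x|) :
    ∃ C : ℝ, ∀ f : ℝ → ℝ, Continuous f → (∃ M, ∀ x, |f x| ≤ M) →
      BddAbove (distSet α f) →
      (∀ x : ℝ, Integrable (fun y => G (x - y) * f y)) ∧
      ∀ x x' y' : ℝ, x' ≠ y' → |x' - y'| ≤ 1 →
        |∫ y : ℝ, G (x - y) * f y| +
            |(∫ y : ℝ, G (x' - y) * f y) - ∫ y : ℝ, G (y' - y) * f y| /
              |x' - y'| ^ (α + 1)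
          ≤ C * distNorm α f := by
  have hGsupp' : HasCompactSupport G := .intro isCompact_Icc hGsupp
  obtain ⟨K, hG⟩ :=
    exists_isLogLipschitzWith (hGsmooth.of_le (mod_cast le_top)) hGsupp' one_half_pos hGlog
  exact (greens_function_schauder_general hα hG hGsupp').imp
    fun C hC f hf _ hb => hC f hf.locallyIntegrable hb
end
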